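/- arXiv:2009.12223 — 3 statements merged into one kernel-verified Lean document; each statement's English description precedes it below -/
import Mathlib

section
/- Let 0<θ≤q<∞ and let {t_k}_{k∈ℤ} be a q-admissible weight sequence satisfying: there exists C>0 such that M_{Q,q}(t_k)·M_{Q,σ₁}(t_k^{-1}) ≤ C for every k∈ℤ and every cube Q, where σ₁ = θ·(q/θ)′. Then, with t_{k,m,q} := ‖t_k‖_{L_q(Q_{k,m})}, for every complex sequence λ one has ‖λ | ḟ_{∞,q}(ℝ^n,{t_k})‖ ≈ sup_{P dyadic} (|P|^{-1}∫_P Σ_{k≥-log₂ l(P)} Σ_{m∈ℤ^n} 2^{knq(1/2+1/q)} t_{k,m,q}^q |λ_{k,m}|^q χ_{k,m}(x) dx)^{1/q}, with comparison constants independent of λ. -/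
/-!
The two quasi-norms are in fact equal, so both constants can be taken to be `1`. Dyadic cubes
are nested: for `k ≥ j`, the cube `Q_{k,m}` is either contained in `P = Q_{j,m₀}` or disjoint
from it. After exchanging sums and integrals, the `(k,m)` term over `P` vanishes on both sides in
the disjoint case. When `Q_{k,m} ⊆ P`, it is `2^{knq/2} |λ_{k,m}|^q ∫_{Q_{k,m}} t_k^q` for the
first quasi-norm, and the same for the second one because
`2^{knq(1/2+1/q)} |Q_{k,m}| = 2^{knq/2}`.
-/

open MeasureTheory ENNReal
noncomputable section

abbrev Rn (n : ℕ) := Fin n → ℝ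

def cube {n : ℕ} (a : Rn n) (h : ℝ) : Set (Rn n) :=
  {x | ∀ i, a i ≤ x i ∧ x i < a i + h}

/-- The dyadic cube `Q_{k,m} = 2^{-k}([0,1)^n + m)`. -/
def dyadic (n : ℕ) (k : ℤ) (m : Fin n → ℤ) : Set (Rn n) :=
  {x | ∀ i, (m i : ℝ) * (2:ℝ) ^ (-k) ≤ x i ∧ x i < ((m i : ℝ) + 1) * (2:ℝ) ^ (-k)}

/-- `M_{Q,s}(f)`, the `s`-average of `f` over `Q` (essential supremum if `s = ∞`). -/
def avgE {n : ℕ} (Q : Set (Rn n)) (s : ℝ≥0∞) (f : Rn n → ℝ≥0∞) : ℝ≥0∞ :=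
  if s = ∞ then essSup f (volume.restrict Q)
  else ((volume Q)⁻¹ * ∫⁻ x in Q, f x ^ s.toReal) ^ (1 / s.toReal)

/-- The `L_p`-norm on a set `Q` (of an `ℝ≥0∞`-valued function). -/
def lpOn {n : ℕ} (Q : Set (Rn n)) (p : ℝ≥0∞) (f : Rn n → ℝ≥0∞) : ℝ≥0∞ :=
  if p = ∞ then essSup f (volume.restrict Q)
  else (∫⁻ x in Q, f x ^ p.toReal) ^ (1 / p.toReal)

/-- The conjugate exponent `r′` of `r ∈ ℝ≥0∞`. -/
def econj (r : ℝ≥0∞) : ℝ≥0∞ :=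
  if r = 1 then ∞ else if r = ∞ then 1 else ENNReal.ofReal (r.toReal / (r.toReal - 1))

def IsWeight {n : ℕ} (γ : Rn n → ℝ≥0∞) : Prop :=
  Measurable γ ∧ (∀ᵐ x, 0 < γ x ∧ γ x < ∞) ∧
    ∀ (a : Rn n) (h : ℝ), 0 < h → ∫⁻ x in cube a h, γ x < ∞

def PAdmissible (n : ℕ) (p : ℝ≥0∞) (t : ℤ → Rn n → ℝ≥0∞) : Prop :=
  (∀ k, IsWeight (t k)) ∧
    ∀ (k : ℤ) (a : Rn n) (h : ℝ), 0 < h → lpOn (cube a h) p (t k) < ∞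

/-- The quasi-norm of the sequence space `ḟ_{∞,q}(ℝ^n, {t_k})`: the supremum over dyadic
cubes `P = Q_{j,m₀}` of the `q`-average over `P` of the layers `k ≥ j = -log₂ l(P)`. -/
def fInftyNorm (n : ℕ) (q : ℝ) (t : ℤ → Rn n → ℝ≥0∞) (lam : ℤ → (Fin n → ℤ) → ℂ) : ℝ≥0∞ :=
  ⨆ (j : ℤ) (m₀ : Fin n → ℤ),
    ((volume (dyadic n j m₀))⁻¹ *
      ∫⁻ x in dyadic n j m₀,
        ∑' (k : {k : ℤ // j ≤ k}) (m : Fin n → ℤ),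
          (2:ℝ≥0∞) ^ ((((k:ℤ):ℝ) * n) * q / 2) * t (k:ℤ) x ^ q * (‖lam (k:ℤ) m‖₊ : ℝ≥0∞) ^ q *
            (dyadic n (k:ℤ) m).indicator (fun _ => (1:ℝ≥0∞)) x) ^ (1 / q)

/-- The discretized version of the `ḟ_{∞,q}` quasi-norm, with `t_k(x)` replaced by
`2^{kn/q} t_{k,m,q}`, `t_{k,m,q} = ‖t_k‖_{L_q(Q_{k,m})}`. -/
def fInftyStar (n : ℕ) (q : ℝ) (t : ℤ → Rn n → ℝ≥0∞) (lam : ℤ → (Fin n → ℤ) → ℂ) : ℝ≥0∞ :=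
  ⨆ (j : ℤ) (m₀ : Fin n → ℤ),
    ((volume (dyadic n j m₀))⁻¹ *
      ∫⁻ x in dyadic n j m₀,
        ∑' (k : {k : ℤ // j ≤ k}) (m : Fin n → ℤ),
          (2:ℝ≥0∞) ^ ((((k:ℤ):ℝ) * n) * q * (1/2 + 1/q)) *
            lpOn (dyadic n (k:ℤ) m) (ENNReal.ofReal q) (t (k:ℤ)) ^ q *
              (‖lam (k:ℤ) m‖₊ : ℝ≥0∞) ^ q *
            (dyadic n (k:ℤ) m).indicator (fun _ => (1:ℝ≥0∞)) x) ^ (1 / q)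

lemma dyadic_eq_pi (n : ℕ) (k : ℤ) (m : Fin n → ℤ) :
    dyadic n k m = Set.pi Set.univ
      (fun i => Set.Ico ((m i : ℝ) * (2:ℝ) ^ (-k)) (((m i : ℝ) + 1) * (2:ℝ) ^ (-k))) := by
  ext x
  simp [dyadic]

lemma measurableSet_dyadic (n : ℕ) (k : ℤ) (m : Fin n → ℤ) : MeasurableSet (dyadic n k m) := by
  rw [dyadic_eq_pi]
  exact MeasurableSet.univ_pi fun _ => measurableSet_Ico

lemma volume_dyadic (n : ℕ) (k : ℤ) (m : Fin n → ℤ) :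
    volume (dyadic n k m) = (2:ℝ≥0∞) ^ (-((k:ℝ) * n)) := by
  have h2 : ENNReal.ofReal ((2:ℝ) ^ (-k)) = (2:ℝ≥0∞) ^ (-(k:ℝ)) := by
    rw [← Real.rpow_intCast, ← ENNReal.ofReal_rpow_of_pos two_pos]
    simp
  have h1 : ∀ i, ((m i : ℝ) + 1) * (2:ℝ) ^ (-k) - (m i : ℝ) * (2:ℝ) ^ (-k) = (2:ℝ) ^ (-k) :=
    fun i => by ring
  rw [dyadic_eq_pi, Real.volume_pi_Ico]
  simp only [h1, h2, Finset.prod_const, Finset.card_univ, Fintype.card_fin]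
  rw [← ENNReal.rpow_natCast, ← ENNReal.rpow_mul, neg_mul]

/-- A dyadic cube that meets a dyadic cube of a coarser (or equal) level is contained in it. -/
lemma dyadic_subset (n : ℕ) {j k : ℤ} (hjk : j ≤ k) (m₀ m : Fin n → ℤ) {x : Rn n}
    (hx : x ∈ dyadic n k m) (hx₀ : x ∈ dyadic n j m₀) : dyadic n k m ⊆ dyadic n j m₀ := by
  obtain ⟨d, rfl⟩ := Int.le.dest hjk
  have hpos : (0:ℝ) < (2:ℝ) ^ (-(j + (d:ℤ))) := by positivity
  have hj : (2:ℝ) ^ (-j) = (2:ℝ) ^ d * (2:ℝ) ^ (-(j + (d:ℤ))) := by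
    rw [← zpow_natCast, ← zpow_add₀ two_ne_zero]
    congr 1
    ring
  intro y hy i
  obtain ⟨a1, a2⟩ := hx i
  obtain ⟨b1, b2⟩ := hx₀ i
  obtain ⟨c1, c2⟩ := hy i
  rw [hj, ← mul_assoc] at b1 b2 ⊢
  rw [← mul_assoc]
  have e1 : m₀ i * 2 ^ d < m i + 1 := by
    have := lt_of_mul_lt_mul_right (b1.trans_lt a2) hpos.le
    exact_mod_cast this
  have e2 : m i < (m₀ i + 1) * 2 ^ d := by
    have := lt_of_mul_lt_mul_right (a1.trans_lt b2) hpos.le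
    exact_mod_cast this
  have f1 : (m₀ i : ℝ) * 2 ^ d ≤ m i := by exact_mod_cast Int.lt_add_one_iff.mp e1
  have f2 : (m i : ℝ) + 1 ≤ ((m₀ i : ℝ) + 1) * 2 ^ d := by exact_mod_cast Int.add_one_le_iff.mpr e2
  exact ⟨(mul_le_mul_of_nonneg_right f1 hpos.le).trans c1,
    c2.trans_le (mul_le_mul_of_nonneg_right f2 hpos.le)⟩

/-- The contributions of a single cube `Q_{k,m}`, with `k ≥ j`, to the integrals over `Q_{j,m₀}`
defining the two quasi-norms agree. -/
lemma lintegral_term_eq (n : ℕ) {q : ℝ} (hq : 0 < q) {f : Rn n → ℝ≥0∞} (hf : Measurable f)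
    (c : ℝ≥0∞) {j k : ℤ} (hjk : j ≤ k) (m₀ m : Fin n → ℤ) :
    ∫⁻ x in dyadic n j m₀, (2:ℝ≥0∞) ^ (((k:ℝ) * n) * q / 2) * f x ^ q * c *
        (dyadic n k m).indicator (fun _ => (1:ℝ≥0∞)) x =
      ∫⁻ x in dyadic n j m₀, (2:ℝ≥0∞) ^ (((k:ℝ) * n) * q * (1/2 + 1/q)) *
        lpOn (dyadic n k m) (ENNReal.ofReal q) f ^ q * c *
        (dyadic n k m).indicator (fun _ => (1:ℝ≥0∞)) x := by
  have key : ∀ g : Rn n → ℝ≥0∞,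
      ∫⁻ x in dyadic n j m₀, g x * (dyadic n k m).indicator (fun _ => (1:ℝ≥0∞)) x =
        ∫⁻ x in dyadic n k m ∩ dyadic n j m₀, g x := by
    intro g
    rw [← Measure.restrict_restrict (measurableSet_dyadic n k m),
      ← lintegral_indicator (measurableSet_dyadic n k m)]
    congr 1 with x
    by_cases hx : x ∈ dyadic n k m <;> simp [hx]
  rw [key, key]
  rcases (dyadic n k m ∩ dyadic n j m₀).eq_empty_or_nonempty with he | ⟨x, hx, hx₀⟩
  · simp [he]
  rw [Set.inter_eq_left.mpr (dyadic_subset n hjk m₀ m hx hx₀), setLIntegral_const, volume_dyadic]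
  have hp : (2:ℝ≥0∞) ^ (((k:ℝ) * n) * q * (1/2 + 1/q)) * (2:ℝ≥0∞) ^ (-((k:ℝ) * n)) =
      (2:ℝ≥0∞) ^ (((k:ℝ) * n) * q / 2) := by
    rw [← ENNReal.rpow_add _ _ two_ne_zero ENNReal.ofNat_ne_top]
    congr 1
    field_simp
    ring
  have hl : lpOn (dyadic n k m) (ENNReal.ofReal q) f ^ q = ∫⁻ x in dyadic n k m, f x ^ q := by
    rw [lpOn, if_neg ENNReal.ofReal_ne_top, ENNReal.toReal_ofReal hq.le, ← ENNReal.rpow_mul,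
      one_div_mul_cancel hq.ne', ENNReal.rpow_one]
  have hfq : Measurable fun x => f x ^ q := hf.pow_const q
  rw [lintegral_mul_const _ (hfq.const_mul _), lintegral_const_mul _ hfq, hl, ← hp]
  ring

/-- The weights enter the discretized quasi-norm only through the integrals of `t_k ^ q` over
dyadic cubes, so that it coincides with the original one. -/
lemma fInftyNorm_eq_fInftyStar (n : ℕ) {q : ℝ} (hq : 0 < q) {t : ℤ → Rn n → ℝ≥0∞}
    (ht : ∀ k, Measurable (t k)) (lam : ℤ → (Fin n → ℤ) → ℂ) :
    fInftyNorm n q t lam = fInftyStar n q t lam := by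
  have hind : ∀ (k : ℤ) (m : Fin n → ℤ),
      Measurable ((dyadic n k m).indicator (fun _ => (1:ℝ≥0∞))) :=
    fun k m => measurable_const.indicator (measurableSet_dyadic n k m)
  have hL : ∀ (k : ℤ) (m : Fin n → ℤ), Measurable fun x =>
      (2:ℝ≥0∞) ^ (((k:ℝ) * n) * q / 2) * t k x ^ q * (‖lam k m‖₊ : ℝ≥0∞) ^ q *
        (dyadic n k m).indicator (fun _ => (1:ℝ≥0∞)) x :=
    fun k m => ((((ht k).pow_const q).const_mul _).mul_const _).mul (hind k m)
  have hR : ∀ (k : ℤ) (m : Fin n → ℤ), Measurable fun x =>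
      (2:ℝ≥0∞) ^ (((k:ℝ) * n) * q * (1/2 + 1/q)) *
        lpOn (dyadic n k m) (ENNReal.ofReal q) (t k) ^ q * (‖lam k m‖₊ : ℝ≥0∞) ^ q *
        (dyadic n k m).indicator (fun _ => (1:ℝ≥0∞)) x :=
    fun k m => (hind k m).const_mul _
  unfold fInftyNorm fInftyStar
  refine iSup_congr fun j => iSup_congr fun m₀ => ?_
  congr 2
  rw [lintegral_tsum fun k : {k : ℤ // j ≤ k} => (Measurable.tsum fun m => hL k m).aemeasurable,
    lintegral_tsum fun k : {k : ℤ // j ≤ k} => (Measurable.tsum fun m => hR k m).aemeasurable]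
  refine tsum_congr fun k => ?_
  rw [lintegral_tsum fun m => (hL k m).aemeasurable, lintegral_tsum fun m => (hR k m).aemeasurable]
  exact tsum_congr fun m => lintegral_term_eq n hq (ht k) _ k.2 m₀ m

/-- **Proposition (equivalent quasi-norm on `ḟ_{∞,q}`).** Let `0 < θ ≤ q < ∞` and let `{t_k}`
be a `q`-admissible weight sequence with `M_{Q,q}(t_k)·M_{Q,σ₁}(t_k^{-1}) ≤ C`, `σ₁ = θ(q/θ)′`.
Then the two quantities above agree up to constants independent of `λ`. -/
theorem stmt7 (n : ℕ) (θ q : ℝ) (hθ : 0 < θ) (hθq : θ ≤ q)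
    (t : ℤ → Rn n → ℝ≥0∞) (ht : PAdmissible n (ENNReal.ofReal q) t)
    (hA : ∃ C : ℝ≥0∞, 0 < C ∧ C < ∞ ∧ ∀ (k : ℤ) (a : Rn n) (h : ℝ), 0 < h →
      avgE (cube a h) (ENNReal.ofReal q) (t k) *
        avgE (cube a h) (ENNReal.ofReal θ * econj (ENNReal.ofReal q / ENNReal.ofReal θ))
          (fun x => (t k x)⁻¹) ≤ C) :
    ∃ c₁ c₂ : ℝ≥0∞, 0 < c₁ ∧ c₁ < ∞ ∧ 0 < c₂ ∧ c₂ < ∞ ∧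
      ∀ lam : ℤ → (Fin n → ℤ) → ℂ,
        c₁ * fInftyNorm n q t lam ≤ fInftyStar n q t lam ∧
          fInftyStar n q t lam ≤ c₂ * fInftyNorm n q t lam := by
  refine ⟨1, 1, one_pos, one_lt_top, one_pos, one_lt_top, fun lam => ?_⟩
  have h := fInftyNorm_eq_fInftyStar n (hθ.trans_le hθq) (fun k => (ht.1 k).1) lam
  rw [one_mul]
  exact ⟨h.le, h.ge⟩

end
end

section
/- Let 0<θ<1, 1-θ<q₀<∞ and θ<q₁<∞, and let ε>0. Let {t_k}⊂L_{q₀}^loc and {w_k}⊂L_{q₁}^loc be weight sequences such that there is C>0 with M_{Q,q₀}(t_k)·M_{Q,(1-θ)(q₀/(1-θ))′}(t_k^{-1}) ≤ C and M_{Q,q₁}(w_k)·M_{Q,θ(q₁/θ)′}(w_k^{-1}) ≤ C for every k∈ℤ and every cube Q. Put 1/q := (1-θ)/q₀ + θ/q₁ and ω_k := t_k^{1-θ}w_k^{θ}. Then there are constants c₁,c₂>0, depending on ε but not on k, Q or E, such that for every cube Q and every measurable E ⊂ Q with |E| ≥ ε|Q| and every k∈ℤ: c₁(∫_E ω_k^q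 dx)^{1/q} ≤ (∫_E t_k^{q₀} dx)^{(1-θ)/q₀}·(∫_E w_k^{q₁} dx)^{θ/q₁} ≤ c₂(∫_E ω_k^q dx)^{1/q}. -/
/-!
The lower estimate, with constant `1`, is Hölder's inequality for the exponents `q₀ / ((1-θ) q)` and
`q₁ / (θ q)`.

For the upper estimate write `p₀ = q₀ / (1-θ)`, `p₁ = q₁ / θ`, `T = t ^ (1-θ)` and `W = w ^ θ`, so
that `1/q = 1/p₀ + 1/p₁`. Since `1/q + 1/p₀' + 1/p₁' = 2`, Hölder's inequality for the three factors
of `1 = (T W)^{1/2} T^{-1/2} W^{-1/2}` gives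
`|E|² ≤ ‖T W‖_{L^q(E)} ‖T⁻¹‖_{L^{p₀'}(E)} ‖W⁻¹‖_{L^{p₁'}(E)}` (`measure_sq_le`).
The Muckenhoupt-type hypotheses read `‖T‖_{L^{p₀}(Q)} ‖T⁻¹‖_{L^{p₀'}(Q)} ≤ C |Q|`, and likewise for
`W` (`lintegral_mul_le_of_avgE`). Multiplying these three inequalities and using `ε |Q| ≤ |E|` to
cancel `|Q|²` bounds `‖T‖_{L^{p₀}(E)} ‖W‖_{L^{p₁}(E)}` by a constant multiple of
`ε⁻² ‖T W‖_{L^q(E)}`.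
-/

open MeasureTheory ENNReal
noncomputable section

theorem volume_cube {n : ℕ} (a : Rn n) {h : ℝ} (hh : 0 < h) :
    volume (cube a h) ≠ 0 ∧ volume (cube a h) ≠ ∞ := by
  have : cube a h = Set.univ.pi fun i => Set.Ico (a i) (a i + h) := by
    ext x; simp [cube]
  rw [this, Real.volume_pi_Ico]
  constructor
  · simp [hh]
  · exact ENNReal.prod_ne_top (by simp)

/-- Clearing the averages in a Muckenhoupt-type bound: as `r / s + r / σ = 1`, the `r`-th power of
the product of the two averages carries exactly one factor `|Q|⁻¹`. -/
theorem lintegral_mul_le_of_avgE {n : ℕ} {Q : Set (Rn n)} (h0 : volume Q ≠ 0)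
    (h1 : volume Q ≠ ∞) {f g : Rn n → ℝ≥0∞} {r s σ : ℝ} (hr : 0 < r) (hs : 0 < s) (hσ : 0 < σ)
    (hsum : r / s + r / σ = 1) {C : ℝ≥0∞}
    (hC : avgE Q (ENNReal.ofReal s) f * avgE Q (ENNReal.ofReal σ) g ≤ C) :
    (∫⁻ x in Q, f x ^ s) ^ (r / s) * (∫⁻ x in Q, g x ^ σ) ^ (r / σ) ≤ C ^ r * volume Q := by
  simp only [avgE, ENNReal.ofReal_ne_top, if_false, ENNReal.toReal_ofReal hs.le,
    ENNReal.toReal_ofReal hσ.le] at hC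
  have h := ENNReal.rpow_le_rpow hC hr.le
  rw [ENNReal.mul_rpow_of_nonneg _ _ hr.le, ← ENNReal.rpow_mul, ← ENNReal.rpow_mul,
    one_div_mul_eq_div, one_div_mul_eq_div, ENNReal.mul_rpow_of_nonneg _ _ (by positivity),
    ENNReal.mul_rpow_of_nonneg _ _ (by positivity), mul_mul_mul_comm,
    ← ENNReal.rpow_add_of_nonneg _ _ (by positivity) (by positivity), hsum, ENNReal.rpow_one] at h
  have h' := mul_le_mul_left h (volume Q)
  rwa [mul_right_comm, ENNReal.inv_mul_cancel h0 h1, one_mul] at h'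

/-- Three-factor Hölder inequality applied to
`1 = (T^{r₀} W^{r₁})^{1/2} (T⁻¹)^{r₀/2} (W⁻¹)^{r₁/2}`, then squared. -/
theorem measure_sq_le {α : Type*} [MeasurableSpace α] (μ : Measure α) {T W : α → ℝ≥0∞}
    (hT : Measurable T) (hW : Measurable W) (hT0 : ∀ᵐ x ∂μ, 0 < T x ∧ T x < ∞)
    (hW0 : ∀ᵐ x ∂μ, 0 < W x ∧ W x < ∞) {r₀ r₁ q σ₀ σ₁ : ℝ} (hr₀ : 0 < r₀) (hr₁ : 0 < r₁)
    (hq : 0 < q) (hσ₀ : 0 < σ₀) (hσ₁ : 0 < σ₁) (hsum : 1 / q + r₀ / σ₀ + r₁ / σ₁ = 2) :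
    μ Set.univ ^ (2 : ℝ) ≤ (∫⁻ x, (T x ^ r₀ * W x ^ r₁) ^ q ∂μ) ^ (1 / q) *
      (∫⁻ x, (T x)⁻¹ ^ σ₀ ∂μ) ^ (r₀ / σ₀) * (∫⁻ x, (W x)⁻¹ ^ σ₁ ∂μ) ^ (r₁ / σ₁) := by
  have key := ENNReal.lintegral_prod_norm_pow_le (μ := μ) (Finset.univ : Finset (Fin 3))
    (f := ![fun x => (T x ^ r₀ * W x ^ r₁) ^ q, fun x => (T x)⁻¹ ^ σ₀, fun x => (W x)⁻¹ ^ σ₁])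
    (p := ![1 / q / 2, r₀ / σ₀ / 2, r₁ / σ₁ / 2])
    (by
      intro i _
      fin_cases i <;> simp <;> fun_prop)
    (by simp only [Fin.sum_univ_three, Matrix.cons_val]; linarith)
    (by intro i _; fin_cases i <;> simp <;> positivity)
  simp only [Fin.prod_univ_three, Matrix.cons_val] at key
  have h1 : ∫⁻ x, ((T x ^ r₀ * W x ^ r₁) ^ q) ^ (1 / q / 2) * ((T x)⁻¹ ^ σ₀) ^ (r₀ / σ₀ / 2) *
      ((W x)⁻¹ ^ σ₁) ^ (r₁ / σ₁ / 2) ∂μ = μ Set.univ := by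
    rw [← lintegral_one]
    refine lintegral_congr_ae ?_
    filter_upwards [hT0, hW0] with x ⟨ht0, ht1⟩ ⟨hw0, hw1⟩
    have e1 : q * (1 / q / 2) = 1 / 2 := by field_simp
    have e2 : σ₀ * (r₀ / σ₀ / 2) = r₀ * (1 / 2) := by field_simp
    have e3 : σ₁ * (r₁ / σ₁ / 2) = r₁ * (1 / 2) := by field_simp
    rw [← ENNReal.rpow_mul, ← ENNReal.rpow_mul, ← ENNReal.rpow_mul, e1, e2, e3,
      ENNReal.rpow_mul, ENNReal.rpow_mul, ← ENNReal.mul_rpow_of_nonneg _ _ (by norm_num),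
      ← ENNReal.mul_rpow_of_nonneg _ _ (by norm_num), mul_assoc, mul_mul_mul_comm,
      ← ENNReal.mul_rpow_of_nonneg _ _ hr₀.le,
      ← ENNReal.mul_rpow_of_nonneg _ _ hr₁.le, ENNReal.mul_inv_cancel ht0.ne' ht1.ne,
      ENNReal.mul_inv_cancel hw0.ne' hw1.ne]
    simp
  rw [h1] at key
  have h2 := ENNReal.rpow_le_rpow key (zero_le_two (α := ℝ))
  rw [ENNReal.mul_rpow_of_nonneg _ _ zero_le_two, ENNReal.mul_rpow_of_nonneg _ _ zero_le_two,
    ← ENNReal.rpow_mul, ← ENNReal.rpow_mul, ← ENNReal.rpow_mul] at h2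
  simpa only [div_mul_cancel₀ _ (two_ne_zero (α := ℝ))] using h2

/-- **Lemma (Hölder-type estimate on subsets of cubes).** Let `0<θ<1`, `1-θ<q₀<∞`,
`θ<q₁<∞`, `ε>0`. Let `{t_k} ⊆ L_{q₀}^loc` and `{w_k} ⊆ L_{q₁}^loc` be weight sequences
satisfying the `Ẋ`-condition (with `j = k`) with `σ₁ = (1-θ)(q₀/(1-θ))′` resp.
`σ₁ = θ(q₁/θ)′`. Put `1/q = (1-θ)/q₀ + θ/q₁` and `ω_k = t_k^{1-θ} w_k^θ`. Then
`(∫_E ω_k^q)^{1/q} ≈ (∫_E t_k^{q₀})^{(1-θ)/q₀} (∫_E w_k^{q₁})^{θ/q₁}` uniformly over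
`k`, cubes `Q` and measurable `E ⊆ Q` with `|E| ≥ ε|Q|`. -/
theorem stmt9 (n : ℕ) (θ q₀ q₁ q ε : ℝ) (hθ : 0 < θ) (hθ1 : θ < 1)
    (hq₀ : 1 - θ < q₀) (hq₁ : θ < q₁) (hε : 0 < ε)
    (hq : 1 / q = (1 - θ) / q₀ + θ / q₁)
    (t w : ℤ → Rn n → ℝ≥0∞)
    (htw : ∀ k, IsWeight (t k) ∧ IsWeight (w k))
    (htloc : ∀ (k : ℤ) (a : Rn n) (h : ℝ), 0 < h → ∫⁻ x in cube a h, t k x ^ q₀ < ∞)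
    (hwloc : ∀ (k : ℤ) (a : Rn n) (h : ℝ), 0 < h → ∫⁻ x in cube a h, w k x ^ q₁ < ∞)
    (hAt : ∃ C : ℝ≥0∞, 0 < C ∧ C < ∞ ∧ ∀ (k : ℤ) (a : Rn n) (h : ℝ), 0 < h →
      avgE (cube a h) (ENNReal.ofReal q₀) (t k) *
        avgE (cube a h)
          (ENNReal.ofReal ((1 - θ) * ((q₀ / (1 - θ)) / (q₀ / (1 - θ) - 1))))
          (fun x => (t k x)⁻¹) ≤ C)
    (hAw : ∃ C : ℝ≥0∞, 0 < C ∧ C < ∞ ∧ ∀ (k : ℤ) (a : Rn n) (h : ℝ), 0 < h →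
      avgE (cube a h) (ENNReal.ofReal q₁) (w k) *
        avgE (cube a h)
          (ENNReal.ofReal (θ * ((q₁ / θ) / (q₁ / θ - 1))))
          (fun x => (w k x)⁻¹) ≤ C) :
    ∃ c₁ c₂ : ℝ≥0∞, 0 < c₁ ∧ c₁ < ∞ ∧ 0 < c₂ ∧ c₂ < ∞ ∧
      ∀ (k : ℤ) (a : Rn n) (h : ℝ), 0 < h → ∀ E : Set (Rn n),
        MeasurableSet E → E ⊆ cube a h →
        ENNReal.ofReal ε * volume (cube a h) ≤ volume E →
        c₁ * (∫⁻ x in E, (t k x ^ (1 - θ) * w k x ^ θ) ^ q) ^ (1 / q) ≤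
            (∫⁻ x in E, t k x ^ q₀) ^ ((1 - θ) / q₀) *
              (∫⁻ x in E, w k x ^ q₁) ^ (θ / q₁) ∧
          (∫⁻ x in E, t k x ^ q₀) ^ ((1 - θ) / q₀) *
              (∫⁻ x in E, w k x ^ q₁) ^ (θ / q₁) ≤
            c₂ * (∫⁻ x in E, (t k x ^ (1 - θ) * w k x ^ θ) ^ q) ^ (1 / q) := by
  obtain ⟨C₀, hC₀, hC₀', hAt⟩ := hAt
  obtain ⟨C₁, hC₁, hC₁', hAw⟩ := hAw
  have hr₀ : 0 < 1 - θ := by linarith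
  have hq₀p : 0 < q₀ := by linarith
  have hq₁p : 0 < q₁ := by linarith
  have hqp : 0 < q := by
    rw [← one_div_pos, hq]; positivity
  set σ₀ := (1 - θ) * ((q₀ / (1 - θ)) / (q₀ / (1 - θ) - 1)) with hσ₀
  set σ₁ := θ * ((q₁ / θ) / (q₁ / θ - 1)) with hσ₁
  -- With `P = p / r > 1` and `σ = r P'`, this is `1 / P + 1 / P' = 1`.
  have conj : ∀ r p : ℝ, 0 < r → r < p →
      0 < r * ((p / r) / (p / r - 1)) ∧ r / p + r / (r * ((p / r) / (p / r - 1))) = 1 := by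
    intro r p hr hp
    have hp0 : 0 < p := hr.trans hp
    have h1 : 0 < p / r - 1 := by rw [sub_pos, one_lt_div hr]; exact hp
    refine ⟨by positivity, ?_⟩
    have h2 : r / (r * ((p / r) / (p / r - 1))) = (p / r - 1) * (r / p) := by
      generalize p / r - 1 = y at *
      field_simp
    rw [h2]; field_simp; ring
  obtain ⟨hσ₀p, hs₀⟩ := conj (1 - θ) q₀ hr₀ hq₀
  obtain ⟨hσ₁p, hs₁⟩ := conj θ q₁ hθ hq₁
  rw [← hσ₀] at hσ₀p hs₀
  rw [← hσ₁] at hσ₁p hs₁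
  have hε2 : ENNReal.ofReal ε ^ (2 : ℝ) ≠ 0 := by simp [hε]
  have hε2' : ENNReal.ofReal ε ^ (2 : ℝ) ≠ ∞ := by finiteness
  refine ⟨1, (ENNReal.ofReal ε ^ (2 : ℝ))⁻¹ * (C₀ ^ (1 - θ) * C₁ ^ θ), one_pos, one_lt_top, ?_, ?_,
    fun k a h hh E hE hEQ hEε => ?_⟩
  · exact ENNReal.mul_pos (ENNReal.inv_ne_zero.2 hε2')
      (mul_ne_zero (ENNReal.rpow_pos hC₀ hC₀'.ne).ne' (ENNReal.rpow_pos hC₁ hC₁'.ne).ne')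
  · exact ENNReal.mul_lt_top (ENNReal.inv_lt_top.2 (pos_iff_ne_zero.2 hε2))
      (ENNReal.mul_lt_top (ENNReal.rpow_lt_top_of_nonneg hr₀.le hC₀'.ne)
        (ENNReal.rpow_lt_top_of_nonneg hθ.le hC₁'.ne))
  obtain ⟨⟨htm, htpos, -⟩, ⟨hwm, hwpos, -⟩⟩ := htw k
  obtain ⟨hV0, hV1⟩ := volume_cube a hh
  constructor
  · have hαβ : (1 - θ) / q₀ * q + θ / q₁ * q = 1 := by
      rw [← add_mul, ← hq]; field_simp
    have H := ENNReal.lintegral_mul_norm_pow_le (μ := volume.restrict E)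
      (f := fun x => t k x ^ q₀) (g := fun x => w k x ^ q₁) (by fun_prop) (by fun_prop)
      (p := (1 - θ) / q₀ * q) (q := θ / q₁ * q) (by positivity) (by positivity) hαβ
    have e : ∀ x, (t k x ^ q₀) ^ ((1 - θ) / q₀ * q) * (w k x ^ q₁) ^ (θ / q₁ * q) =
        (t k x ^ (1 - θ) * w k x ^ θ) ^ q := by
      intro x
      rw [← ENNReal.rpow_mul, ← ENNReal.rpow_mul, ENNReal.mul_rpow_of_nonneg _ _ hqp.le,
        ← ENNReal.rpow_mul, ← ENNReal.rpow_mul]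
      congr 2 <;> field_simp
    simp only [e] at H
    have H' := ENNReal.rpow_le_rpow H (one_div_pos.2 hqp).le
    rw [ENNReal.mul_rpow_of_nonneg _ _ (one_div_pos.2 hqp).le, ← ENNReal.rpow_mul,
      ← ENNReal.rpow_mul, mul_assoc, mul_assoc, mul_one_div_cancel hqp.ne', mul_one,
      mul_one] at H'
    rwa [one_mul]
  · have A₀ := lintegral_mul_le_of_avgE hV0 hV1 hr₀ hq₀p hσ₀p hs₀ (hAt k a h hh)
    have A₁ := lintegral_mul_le_of_avgE hV0 hV1 hθ hq₁p hσ₁p hs₁ (hAw k a h hh)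
    have B := measure_sq_le (volume.restrict E) htm hwm (ae_restrict_of_ae htpos)
      (ae_restrict_of_ae hwpos) hr₀ hθ hqp hσ₀p hσ₁p (by rw [hq]; linarith)
    rw [Measure.restrict_apply_univ] at B
    set V := volume (cube a h)
    set N := (∫⁻ x in E, (t k x ^ (1 - θ) * w k x ^ θ) ^ q) ^ (1 / q)
    set X := (∫⁻ x in E, t k x ^ q₀) ^ ((1 - θ) / q₀)
    set Y := (∫⁻ x in E, w k x ^ q₁) ^ (θ / q₁)
    set X' := (∫⁻ x in E, (t k x)⁻¹ ^ σ₀) ^ ((1 - θ) / σ₀)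
    set Y' := (∫⁻ x in E, (w k x)⁻¹ ^ σ₁) ^ (θ / σ₁)
    have hX : X * X' ≤ C₀ ^ (1 - θ) * V := by
      refine le_trans ?_ A₀
      exact mul_le_mul' (ENNReal.rpow_le_rpow (lintegral_mono_set hEQ) (by positivity))
        (ENNReal.rpow_le_rpow (lintegral_mono_set hEQ) (by positivity))
    have hY : Y * Y' ≤ C₁ ^ θ * V := by
      refine le_trans ?_ A₁
      exact mul_le_mul' (ENNReal.rpow_le_rpow (lintegral_mono_set hEQ) (by positivity))
        (ENNReal.rpow_le_rpow (lintegral_mono_set hEQ) (by positivity))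
    have hV2 : V ^ (2 : ℝ) = V * V := by
      rw [ENNReal.rpow_two, sq]
    -- `V` is positive and finite, so the common factor `V ^ 2` cancels; no integral is divided by,
    -- so none has to be known to be finite or nonzero.
    have main : V ^ (2 : ℝ) * (ENNReal.ofReal ε ^ (2 : ℝ) * (X * Y)) ≤
        V ^ (2 : ℝ) * (C₀ ^ (1 - θ) * C₁ ^ θ * N) := by
      calc V ^ (2 : ℝ) * (ENNReal.ofReal ε ^ (2 : ℝ) * (X * Y))
          = (ENNReal.ofReal ε * V) ^ (2 : ℝ) * (X * Y) := by
            rw [ENNReal.mul_rpow_of_nonneg _ _ zero_le_two]; ring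
        _ ≤ (N * X' * Y') * (X * Y) := by
            gcongr
            exact (ENNReal.rpow_le_rpow hEε zero_le_two).trans B
        _ = N * ((X * X') * (Y * Y')) := by ring
        _ ≤ N * ((C₀ ^ (1 - θ) * V) * (C₁ ^ θ * V)) := by gcongr
        _ = V ^ (2 : ℝ) * (C₀ ^ (1 - θ) * C₁ ^ θ * N) := by rw [hV2]; ring
    rw [ENNReal.mul_le_mul_iff_right (by rw [hV2]; exact mul_ne_zero hV0 hV0)
      (by rw [hV2]; exact ENNReal.mul_ne_top hV1 hV1)] at main
    calc X * Y = (ENNReal.ofReal ε ^ (2 : ℝ))⁻¹ * (ENNReal.ofReal ε ^ (2 : ℝ) * (X * Y)) := by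
          rw [← mul_assoc, ENNReal.inv_mul_cancel hε2 hε2', one_mul]
      _ ≤ (ENNReal.ofReal ε ^ (2 : ℝ))⁻¹ * (C₀ ^ (1 - θ) * C₁ ^ θ * N) := by gcongr
      _ = _ := by ring

end
end

section
/- Let 0<θ≤p≤∞, α=(α₁,α₂)∈ℝ², σ=(σ₁,σ₂) with σ₁ = θ·(p/θ)′ and σ₂ ≥ p. If {t_k}_{k∈ℤ} is a p-admissible weight sequence belonging to the class Ẋ_{α,σ,p}, then α₂ ≥ α₁. -/
/-! On a unit cube `Q` all the averages involved are `L^s`-norms for a probability measure. Let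
`A = M_{Q,p}(t_k)`, `B = M_{Q,σ₁}(t_j⁻¹)` and `D = M_{Q,σ₂}(t_j)` with `k ≤ j`. The two conditions
defining the class are `A * B ≤ C₁ 2^{α₁(k - j)}` and `D ≤ C₂ 2^{α₂(j - k)} A`, so
`B * D ≤ C₂ 2^{α₂(j - k)} (A * B) ≤ C₁ C₂ 2^{(α₂ - α₁)(j - k)}`. On the
other hand `1 ≤ B * D`: both norms dominate the `L^s`-norm with `s = min(σ₁, σ₂, 1)`
(`eLpNorm_le_eLpNorm_of_exponent_le`), and Cauchy–Schwarz gives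
`1 = ∫ t_j^{s/2} t_j^{-s/2} ≤ ‖t_j‖_s^{s/2} ‖t_j⁻¹‖_s^{s/2}` (`one_le_eLpNorm_mul_eLpNorm_inv`). So
the right-hand side stays away from `0` as `j → ∞`, which forces `α₁ ≤ α₂`. The exact value of `σ₁`
plays no role beyond `σ₁ > 0`.

When `θ = p = ∞` the `ℝ≥0∞` conventions make `σ₁ = ∞ * econj 0 = 0` and `M_{Q,0} = 1`, so the first
condition reads `A ≤ C₁ 2^{α₁(k - j)}`. Letting `j → ∞` gives `α₁ ≤ 0`; bounding `A` by the case
`j = k` and letting `k → -∞` in the second condition gives `0 ≤ α₂`. -/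

open MeasureTheory ENNReal
noncomputable section

/-- Tyulenev's weight class `Ẋ_{α,σ,p}`: the set of `p`-admissible weight sequences `{t_k}`
such that for some `C₁, C₂ > 0`, for all `k ≤ j` and every cube `Q`,
`M_{Q,p}(t_k)·M_{Q,σ₁}(t_j^{-1}) ≤ C₁ 2^{α₁(k-j)}` and
`M_{Q,σ₂}(t_j) ≤ C₂ 2^{α₂(j-k)}·M_{Q,p}(t_k)`. -/
def Xclass (n : ℕ) (α₁ α₂ : ℝ) (σ₁ σ₂ p : ℝ≥0∞) (t : ℤ → Rn n → ℝ≥0∞) : Prop :=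
  PAdmissible n p t ∧
  ∃ C₁ C₂ : ℝ≥0∞, 0 < C₁ ∧ C₁ < ∞ ∧ 0 < C₂ ∧ C₂ < ∞ ∧
    ∀ (k j : ℤ), k ≤ j → ∀ (a : Rn n) (h : ℝ), 0 < h →
      avgE (cube a h) p (t k) * avgE (cube a h) σ₁ (fun x => (t j x)⁻¹) ≤
          C₁ * (2:ℝ≥0∞) ^ (α₁ * ((k:ℝ) - (j:ℝ))) ∧
        avgE (cube a h) σ₂ (t j) ≤
          C₂ * (2:ℝ≥0∞) ^ (α₂ * ((j:ℝ) - (k:ℝ))) * avgE (cube a h) p (t k)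

lemma volume_cube_one {n : ℕ} (a : Rn n) : volume (cube a 1) = 1 := by
  have h : cube a 1 = Set.pi Set.univ (fun i => Set.Ico (a i) (a i + 1)) := by
    ext x; simp [cube]
  rw [h, Real.volume_pi_Ico]
  simp

lemma avgE_eq_eLpNorm {n : ℕ} (a : Rn n) {s : ℝ≥0∞} (hs : s ≠ 0) (f : Rn n → ℝ≥0∞) :
    avgE (cube a 1) s f = eLpNorm f s (volume.restrict (cube a 1)) := by
  by_cases h : s = ∞
  · subst h
    simp [avgE, eLpNormEssSup]
  · rw [eLpNorm_eq_lintegral_rpow_enorm_toReal hs h]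
    simp [avgE, h, volume_cube_one]

lemma avgE_zero {n : ℕ} (a : Rn n) (f : Rn n → ℝ≥0∞) : avgE (cube a 1) 0 f = 1 := by
  simp [avgE]

/-- Cauchy–Schwarz applied to `f^{s/2}` and `f^{-s/2}`, followed by monotonicity of the
`L^s`-norms of a probability measure in the exponent. -/
lemma one_le_eLpNorm_mul_eLpNorm_inv {X : Type*} [MeasurableSpace X] (μ : Measure X)
    [IsProbabilityMeasure μ] {f : X → ℝ≥0∞} (hf : Measurable f)
    (hpos : ∀ᵐ x ∂μ, 0 < f x ∧ f x < ∞) {q r : ℝ≥0∞} (hq : 0 < q) (hr : 0 < r) :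
    1 ≤ eLpNorm (fun x => (f x)⁻¹) q μ * eLpNorm f r μ := by
  set s : ℝ≥0∞ := min (min q r) 1 with hs
  have hs0 : s ≠ 0 := (lt_min (lt_min hq hr) one_pos).ne'
  have hst : s ≠ ∞ := ((min_le_right _ _).trans_lt one_lt_top).ne
  have hsq : s ≤ q := (min_le_left _ _).trans (min_le_left _ _)
  have hsr : s ≤ r := (min_le_left _ _).trans (min_le_right _ _)
  have hs' : 0 < s.toReal := ENNReal.toReal_pos hs0 hst
  refine le_trans ?_ (mul_le_mul'
    (eLpNorm_le_eLpNorm_of_exponent_le hsq hf.inv.aestronglyMeasurable)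
    (eLpNorm_le_eLpNorm_of_exponent_le hsr hf.aestronglyMeasurable))
  rw [eLpNorm_eq_lintegral_rpow_enorm_toReal hs0 hst,
    eLpNorm_eq_lintegral_rpow_enorm_toReal hs0 hst,
    ← ENNReal.mul_rpow_of_nonneg _ _ (by positivity)]
  have key := ENNReal.lintegral_mul_le_Lp_mul_Lq μ Real.HolderConjugate.two_two
    (f := fun x => ((f x)⁻¹) ^ (s.toReal / 2)) (g := fun x => (f x) ^ (s.toReal / 2))
    (hf.inv.pow_const _).aemeasurable (hf.pow_const _).aemeasurable
  have h1 : ∫⁻ x, ((fun x => ((f x)⁻¹) ^ (s.toReal / 2)) *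
      fun x => (f x) ^ (s.toReal / 2)) x ∂μ = 1 := by
    rw [lintegral_congr_ae (g := fun _ => 1)]
    · simp
    · filter_upwards [hpos] with x hx
      simp only [Pi.mul_apply]
      rw [← ENNReal.mul_rpow_of_nonneg _ _ (by positivity),
        ENNReal.inv_mul_cancel hx.1.ne' hx.2.ne, ENNReal.one_rpow]
  rw [h1, ← ENNReal.mul_rpow_of_nonneg _ _ (by positivity)] at key
  simp only [← ENNReal.rpow_mul, div_mul_cancel₀ _ (two_ne_zero' ℝ)] at key
  simp only [enorm_eq_self]
  apply ENNReal.one_le_rpow _ (by positivity)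
  by_contra! hlt
  exact absurd key (not_le.2 (ENNReal.rpow_lt_one hlt (by norm_num)))

/-- A constant dominated by an exponentially decaying sequence vanishes. -/
lemma eq_zero_of_le_two_rpow {c C : ℝ≥0∞} (hC : C ≠ ∞) {ε : ℝ} (hε : ε < 0)
    (h : ∀ m : ℕ, c ≤ C * (2 : ℝ≥0∞) ^ (ε * m)) : c = 0 := by
  have hlt : (2 : ℝ≥0∞) ^ ε < 1 := ENNReal.rpow_lt_one_of_one_lt_of_neg (by norm_num) hε
  have ht := ENNReal.Tendsto.const_mul (a := C)
    (ENNReal.tendsto_pow_atTop_nhds_zero_of_lt_one hlt) (Or.inr hC)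
  rw [mul_zero] at ht
  refine le_antisymm (ge_of_tendsto' ht fun m => ?_) zero_le
  simpa [ENNReal.rpow_mul, ENNReal.rpow_natCast] using h m

lemma econj_pos {r : ℝ≥0∞} (hr : 1 ≤ r) : 0 < econj r := by
  unfold econj
  split_ifs with h1 h2
  · simp
  · simp
  · have : 1 < r.toReal := by
      rw [← ENNReal.toReal_one]
      exact (ENNReal.toReal_lt_toReal one_ne_top h2).2 (lt_of_le_of_ne hr (Ne.symm h1))
    exact ENNReal.ofReal_pos.2 (div_pos (by linarith) (by linarith))

/-- **Remark 2.6.** Let `0 < θ ≤ p ≤ ∞`, `σ₁ = θ(p/θ)′`, `σ₂ ≥ p`. If the `p`-admissible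
weight sequence `{t_k}` belongs to `Ẋ_{α,σ,p}`, then `α₂ ≥ α₁`. -/
theorem stmt19 (n : ℕ) (α₁ α₂ : ℝ) (θ p σ₂ : ℝ≥0∞) (hθ : 0 < θ) (hθp : θ ≤ p)
    (hσ₂ : p ≤ σ₂) (t : ℤ → Rn n → ℝ≥0∞)
    (ht : Xclass n α₁ α₂ (θ * econj (p / θ)) σ₂ p t) : α₁ ≤ α₂ := by
  obtain ⟨⟨hw, hfin⟩, C₁, C₂, -, hC₁, -, hC₂, H⟩ := ht
  have hp : 0 < p := hθ.trans_le hθp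
  have hσ₂0 : 0 < σ₂ := hp.trans_le hσ₂
  set μ : Measure (Rn n) := volume.restrict (cube (0 : Rn n) 1) with hμ
  have : IsProbabilityMeasure μ := ⟨by simp [hμ, volume_cube_one]⟩
  have hpos (k : ℤ) : ∀ᵐ x ∂μ, 0 < t k x ∧ t k x < ∞ := ae_restrict_of_ae (hw k).2.1
  have H' (k j : ℤ) (hkj : k ≤ j) := H k j hkj 0 1 one_pos
  simp only [avgE_eq_eLpNorm _ hp.ne', avgE_eq_eLpNorm _ hσ₂0.ne', ← hμ] at H'
  have h2 : (2 : ℝ≥0∞) ≠ 0 := two_ne_zero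
  have h2' : (2 : ℝ≥0∞) ≠ ∞ := ofNat_ne_top
  by_contra! hlt
  by_cases hθt : θ = ∞
  -- Degenerate exponent: `∞ / ∞ = 0` in `ℝ≥0∞`, so `σ₁ = ∞ * econj 0 = 0`.
  · obtain rfl : p = ∞ := top_le_iff.1 (hθt ▸ hθp)
    have hσ₁ : θ * econj (∞ / θ) = 0 := by simp [hθt, econj]
    simp only [hσ₁, avgE_zero, mul_one] at H'
    have hne (k : ℤ) : eLpNorm (t k) ∞ μ ≠ 0 := by
      intro h0
      have := one_le_eLpNorm_mul_eLpNorm_inv μ (hw k).1 (hpos k) hp hp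
      simp [h0] at this
    have hα₁ : α₁ ≤ 0 := by
      by_contra! hα
      refine hne 0 (eq_zero_of_le_two_rpow hC₁.ne (neg_lt_zero.2 hα) fun m => ?_)
      have := (H' 0 m (by positivity)).1
      convert this using 3
      push_cast; ring
    refine hne 0 (eq_zero_of_le_two_rpow (C := C₂ * C₁) (mul_ne_top hC₂.ne hC₁.ne)
      (hlt.trans_le hα₁) fun m => ?_)
    have hA := (H' (-m) (-m) le_rfl).1
    rw [sub_self, mul_zero, ENNReal.rpow_zero, mul_one] at hA
    have hD := (H' (-m) 0 (by simp)).2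
    calc eLpNorm (t 0) ∞ μ
        ≤ eLpNorm (t 0) σ₂ μ := by rw [top_le_iff.1 hσ₂]
      _ ≤ C₂ * 2 ^ (α₂ * m) * eLpNorm (t (-m)) ∞ μ := by simpa using hD
      _ ≤ C₂ * 2 ^ (α₂ * m) * C₁ := by gcongr
      _ = C₂ * C₁ * 2 ^ (α₂ * m) := by ring
  · have hσ₁ : 0 < θ * econj (p / θ) := by
      refine ENNReal.mul_pos hθ.ne' (econj_pos ?_).ne'
      rwa [ENNReal.le_div_iff_mul_le (Or.inl hθ.ne') (Or.inl hθt), one_mul]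
    simp only [avgE_eq_eLpNorm _ hσ₁.ne', ← hμ] at H'
    refine one_ne_zero (eq_zero_of_le_two_rpow (c := 1) (C := C₁ * C₂)
      (mul_ne_top hC₁.ne hC₂.ne) (sub_neg.2 hlt) fun m => ?_)
    obtain ⟨hAB, hD⟩ := H' 0 m (by positivity)
    have hBD := one_le_eLpNorm_mul_eLpNorm_inv μ (hw m).1 (hpos m) hσ₁ hσ₂0
    set A := eLpNorm (t 0) p μ
    set B := eLpNorm (fun x => (t m x)⁻¹) (θ * econj (p / θ)) μ
    calc (1 : ℝ≥0∞) ≤ B * eLpNorm (t m) σ₂ μ := hBD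
      _ ≤ B * (C₂ * 2 ^ (α₂ * (((m : ℤ) : ℝ) - ((0 : ℤ) : ℝ))) * A) := by gcongr
      _ = (A * B) * (C₂ * 2 ^ (α₂ * (((m : ℤ) : ℝ) - ((0 : ℤ) : ℝ)))) := by ring
      _ ≤ (C₁ * 2 ^ (α₁ * (((0 : ℤ) : ℝ) - ((m : ℤ) : ℝ)))) *
            (C₂ * 2 ^ (α₂ * (((m : ℤ) : ℝ) - ((0 : ℤ) : ℝ)))) := by gcongr
      _ = C₁ * C₂ * (2 ^ (α₁ * (((0 : ℤ) : ℝ) - ((m : ℤ) : ℝ))) *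
            2 ^ (α₂ * (((m : ℤ) : ℝ) - ((0 : ℤ) : ℝ)))) := by ring
      _ = C₁ * C₂ * 2 ^ ((α₂ - α₁) * m) := by
        rw [← ENNReal.rpow_add _ _ h2 h2']
        congr 2
        push_cast; ring
end
end
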